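/- Let 0 < p < 1 and let α, β be real with α ≥ β > 0, α² + β² = 1, and suppose p²/(1−p+p²) ≤ α² < 1. Then the maximum achievable fidelity under trace-preserving LOCC of ρ(χ(α), Λ_p) equals F*(ρ(χ(α), Λ_p)) = (1 + 2αβ√(1−p) − pβ²)/2; i.e., it coincides with the pre-processed fidelity F(ρ(χ(α), Λ_p)). -/

import Mathlib

open Matrix Complex
open scoped Kronecker ComplexOrder

/-- Index type for two qubits: the product basis of ℂ² ⊗ ℂ². -/
abbrev Q2 := Fin 2 × Fin 2

/-- Kraus operator `M₀` of the amplitude damping channel. -/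
noncomputable def M0 (p : ℝ) : Matrix (Fin 2) (Fin 2) ℂ :=
  !![1, 0; 0, (Real.sqrt (1 - p) : ℂ)]

/-- Kraus operator `M₁` of the amplitude damping channel. -/
noncomputable def M1 (p : ℝ) : Matrix (Fin 2) (Fin 2) ℂ :=
  !![0, (Real.sqrt p : ℂ); 0, 0]

/-- Outer product `|ψ⟩⟨ψ|` of a two-qubit vector. -/
noncomputable def outer (ψ : Q2 → ℂ) : Matrix Q2 Q2 ℂ :=
  Matrix.of fun i j => ψ i * star (ψ j)

/-- The state `ρ(χ, Λ_p)` obtained by applying the amplitude damping channel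
with parameter `p` to the second qubit: `Σᵢ (I ⊗ Mᵢ) ρ (I ⊗ Mᵢ)†`. -/
noncomputable def ampDamp (p : ℝ) (ρ : Matrix Q2 Q2 ℂ) : Matrix Q2 Q2 ℂ :=
  ((1 : Matrix (Fin 2) (Fin 2) ℂ) ⊗ₖ M0 p) * ρ * ((1 : Matrix (Fin 2) (Fin 2) ℂ) ⊗ₖ M0 p)ᴴ +
  ((1 : Matrix (Fin 2) (Fin 2) ℂ) ⊗ₖ M1 p) * ρ * ((1 : Matrix (Fin 2) (Fin 2) ℂ) ⊗ₖ M1 p)ᴴ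

/-- The pure state `|χ⟩ = a|00⟩ + b|11⟩`. -/
noncomputable def ketChi (a b : ℝ) : Q2 → ℂ :=
  fun ij => if ij = ((0 : Fin 2), (0 : Fin 2)) then (a : ℂ)
    else if ij = ((1 : Fin 2), (1 : Fin 2)) then (b : ℂ) else 0

/-- The maximally entangled state `|Φ⁺⟩ = (|00⟩ + |11⟩)/√2`. -/
noncomputable def phiPlus : Q2 → ℂ := ketChi (Real.sqrt 2)⁻¹ (Real.sqrt 2)⁻¹

/-- The optimal transmitted state `|χ₀⟩ = (1/√(2−p))|00⟩ + √((1−p)/(2−p))|11⟩`. -/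
noncomputable def ketChi0 (p : ℝ) : Q2 → ℂ :=
  ketChi (Real.sqrt (1 / (2 - p))) (Real.sqrt ((1 - p) / (2 - p)))

/-- Reduced density matrix on the first qubit (trace out the second qubit). -/
noncomputable def trSecond (ρ : Matrix Q2 Q2 ℂ) : Matrix (Fin 2) (Fin 2) ℂ :=
  Matrix.of fun i k => ∑ j : Fin 2, ρ (i, j) (k, j)

/-- Reduced density matrix on the second qubit (trace out the first qubit). -/
noncomputable def trFirst (ρ : Matrix Q2 Q2 ℂ) : Matrix (Fin 2) (Fin 2) ℂ :=
  Matrix.of fun j l => ∑ i : Fin 2, ρ (i, j) (i, l)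

/-- A unit vector `ψ ∈ ℂ²⊗ℂ²` is maximally entangled if both reduced density
matrices of `|ψ⟩⟨ψ|` equal `I/2`. -/
def MaxEnt (ψ : Q2 → ℂ) : Prop :=
  (∑ ij : Q2, Complex.normSq (ψ ij)) = 1 ∧
  trSecond (outer ψ) = (1 / 2 : ℂ) • (1 : Matrix (Fin 2) (Fin 2) ℂ) ∧
  trFirst (outer ψ) = (1 / 2 : ℂ) • (1 : Matrix (Fin 2) (Fin 2) ℂ)

/-- The real expectation value `⟨ψ|ρ|ψ⟩`. -/
noncomputable def expectation (ψ : Q2 → ℂ) (ρ : Matrix Q2 Q2 ℂ) : ℝ :=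
  (∑ i : Q2, ∑ j : Q2, star (ψ i) * ρ i j * ψ j).re

/-- Fidelity (fully entangled fraction): `F(ρ) = sup_Ψ ⟨Ψ|ρ|Ψ⟩` over maximally
entangled unit vectors `Ψ`. -/
noncomputable def Fid (ρ : Matrix Q2 Q2 ℂ) : ℝ :=
  sSup {x : ℝ | ∃ ψ : Q2 → ℂ, MaxEnt ψ ∧ x = expectation ψ ρ}

/-- Partial transposition on the second qubit: `(ρ^Γ)_{(i,j),(k,l)} = ρ_{(i,l),(k,j)}`. -/
def ptrans (ρ : Matrix Q2 Q2 ℂ) : Matrix Q2 Q2 ℂ :=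
  Matrix.of fun ij kl => ρ (ij.1, kl.2) (kl.1, ij.2)

/-- The Verstraete–Verschelde maximum achievable fidelity under trace-preserving LOCC,
as the value of the semidefinite program
`F*(ρ) = sup { 1/2 − Tr(X ρ^Γ) : X Hermitian, 0 ≤ X ≤ I, −I/2 ≤ X^Γ ≤ I/2 }`. -/
noncomputable def FStar (ρ : Matrix Q2 Q2 ℂ) : ℝ :=
  sSup {x : ℝ | ∃ X : Matrix Q2 Q2 ℂ,
    X.IsHermitian ∧ X.PosSemidef ∧ ((1 : Matrix Q2 Q2 ℂ) - X).PosSemidef ∧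
    (ptrans X + (1 / 2 : ℂ) • (1 : Matrix Q2 Q2 ℂ)).PosSemidef ∧
    ((1 / 2 : ℂ) • (1 : Matrix Q2 Q2 ℂ) - ptrans X).PosSemidef ∧
    x = 1 / 2 - ((X * ptrans ρ).trace).re}

/-- The Pauli matrix `σ_y`. -/
noncomputable def sigY : Matrix (Fin 2) (Fin 2) ℂ := !![0, -Complex.I; Complex.I, 0]

/-- The matrix `ρ (σ_y⊗σ_y) ρ̄ (σ_y⊗σ_y)` whose eigenvalues define the concurrence. -/
noncomputable def Rmat (ρ : Matrix Q2 Q2 ℂ) : Matrix Q2 Q2 ℂ :=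
  ρ * (sigY ⊗ₖ sigY) * ρ.map (starRingEnd ℂ) * (sigY ⊗ₖ sigY)

/-- `c` is the concurrence of `ρ`: `c = max(0, λ₁ − λ₂ − λ₃ − λ₄)` where
`λ₁ ≥ λ₂ ≥ λ₃ ≥ λ₄ ≥ 0` are the square roots of the eigenvalues (with multiplicity)
of `ρ (σ_y⊗σ_y) ρ̄ (σ_y⊗σ_y)`. -/
def IsConcurrence (ρ : Matrix Q2 Q2 ℂ) (c : ℝ) : Prop :=
  ∃ lam : Fin 4 → ℝ,
    (∀ i j : Fin 4, i ≤ j → lam j ≤ lam i) ∧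
    (∀ i : Fin 4, 0 ≤ lam i) ∧
    (Rmat ρ).charpoly = ∏ i : Fin 4, (Polynomial.X - Polynomial.C ((lam i : ℂ) ^ 2)) ∧
    c = max 0 (lam 0 - lam 1 - lam 2 - lam 3)

/-- `μ` is an eigenvalue of the matrix `A`. -/
def IsEigenvalue (A : Matrix Q2 Q2 ℂ) (μ : ℂ) : Prop :=
  ∃ v : Q2 → ℂ, v ≠ 0 ∧ A *ᵥ v = μ • v

/-!
Put `P = |Φ⁺⟩⟨Φ⁺|`. The operator `I/2 - P^Γ` is the projection onto the singlet; it is feasible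
for the semidefinite program and has value `⟨Φ⁺|ρ|Φ⁺⟩` on a state `ρ`. Conversely, every `B ≥ 0`
with `(ρ + B)^Γ ≥ 0` certifies `F*(ρ) ≤ (1 + Tr B) / 2`, because `Tr (X (ρ + B)^Γ) ≥ 0` and
`Tr (X^Γ B) ≤ Tr B / 2` for every feasible `X`.

For the damped state `ρ = |v⟩⟨v| + p β² |10⟩⟨10|` with `v = α|00⟩ + β √(1 - p)|11⟩`, take
`B = p β² |01⟩⟨01| + κ (|00⟩ - |11⟩)(⟨00| - ⟨11|)` with `κ = α β √(1 - p) - p β²`. The coherence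
`|00⟩⟨11|` of `ρ + B` is `p β²`, which after partial transposition is exactly balanced by the
weights `p β²` on `|01⟩` and `|10⟩`. The lower bound on `α²` is what makes `κ ≥ 0`.
-/

section PureStates

open scoped MatrixOrder

lemma trace_mul_nonneg_of_posSemidef {n : Type*} [Fintype n] {A B : Matrix n n ℂ}
    (hA : A.PosSemidef) (hB : B.PosSemidef) : 0 ≤ (A * B).trace := by
  classical
  obtain ⟨C, rfl⟩ := CStarAlgebra.nonneg_iff_eq_star_mul_self.mp hA.nonneg
  rw [Matrix.mul_assoc, Matrix.trace_mul_comm]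
  exact (hB.mul_mul_conjTranspose_same C).trace_nonneg

lemma outer_eq_vecMulVec (ψ : Q2 → ℂ) : outer ψ = vecMulVec ψ (star ψ) := rfl

lemma outer_posSemidef (ψ : Q2 → ℂ) : (outer ψ).PosSemidef :=
  posSemidef_vecMulVec_self_star ψ

lemma trace_outer (ψ : Q2 → ℂ) : (outer ψ).trace = star ψ ⬝ᵥ ψ := by
  rw [outer_eq_vecMulVec, trace_vecMulVec, dotProduct_comm]

lemma mul_outer_mul_conjTranspose (A : Matrix Q2 Q2 ℂ) (ψ : Q2 → ℂ) :
    A * outer ψ * Aᴴ = outer (A *ᵥ ψ) := by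
  rw [outer_eq_vecMulVec, outer_eq_vecMulVec, mul_vecMulVec, vecMulVec_mul, star_mulVec]

lemma isStarProjection_outer {ψ : Q2 → ℂ} (hψ : star ψ ⬝ᵥ ψ = 1) :
    IsStarProjection (outer ψ) where
  isIdempotentElem := by
    rw [IsIdempotentElem, outer_eq_vecMulVec, vecMulVec_mul_vecMulVec, hψ, one_smul]
  isSelfAdjoint := (outer_posSemidef ψ).isHermitian

lemma one_sub_outer_posSemidef {ψ : Q2 → ℂ} (hψ : star ψ ⬝ᵥ ψ = 1) :
    (1 - outer ψ).PosSemidef :=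
  (isStarProjection_outer hψ).one_sub_nonneg.posSemidef

lemma re_trace_outer_mul (ψ : Q2 → ℂ) (ρ : Matrix Q2 Q2 ℂ) :
    (outer ψ * ρ).trace.re = expectation ψ ρ := by
  rw [outer_eq_vecMulVec, vecMulVec_mul, trace_vecMulVec, dotProduct_comm, ← dotProduct_mulVec]
  simp only [expectation, dotProduct, mulVec, Pi.star_apply, Finset.mul_sum, mul_assoc]

lemma expectation_add (ψ : Q2 → ℂ) (ρ σ : Matrix Q2 Q2 ℂ) :
    expectation ψ (ρ + σ) = expectation ψ ρ + expectation ψ σ := by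
  simp only [← re_trace_outer_mul, Matrix.mul_add, trace_add, add_re]

lemma expectation_outer (ψ φ : Q2 → ℂ) :
    expectation ψ (outer φ) = normSq (star ψ ⬝ᵥ φ) := by
  have hconj : ψ ⬝ᵥ star φ = star (star ψ ⬝ᵥ φ) := by
    rw [star_dotProduct, star_star, dotProduct_comm]
  rw [← re_trace_outer_mul, outer_eq_vecMulVec, outer_eq_vecMulVec, vecMulVec_mul_vecMulVec,
    trace_vecMulVec, dotProduct_smul, hconj, smul_eq_mul, star_def, mul_conj, ofReal_re]

lemma re_trace_half_smul_one_mul (ρ : Matrix Q2 Q2 ℂ) :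
    ((1 / 2 : ℂ) • (1 : Matrix Q2 Q2 ℂ) * ρ).trace.re = ρ.trace.re / 2 := by
  rw [smul_mul_assoc, one_mul, trace_smul, smul_eq_mul, one_div_mul_eq_div, div_ofNat_re]

lemma star_ketChi_dotProduct_ketChi (a b c d : ℝ) :
    star (ketChi a b) ⬝ᵥ ketChi c d = ((a * c + b * d : ℝ) : ℂ) := by
  simp [dotProduct, ketChi, Fintype.sum_prod_type]

lemma star_single_dotProduct_single (i : Q2) (c : ℝ) :
    star (Pi.single i (c : ℂ)) ⬝ᵥ Pi.single i (c : ℂ) = ((c ^ 2 : ℝ) : ℂ) := by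
  simp [sq]

end PureStates

section PartialTranspose

lemma ptrans_add (ρ σ : Matrix Q2 Q2 ℂ) : ptrans (ρ + σ) = ptrans ρ + ptrans σ := rfl

lemma trace_mul_ptrans (X ρ : Matrix Q2 Q2 ℂ) :
    (X * ptrans ρ).trace = (ptrans X * ρ).trace := by
  simp only [trace, diag_apply, mul_apply, ptrans, of_apply, Fintype.sum_prod_type,
    Fin.sum_univ_two]
  ring

end PartialTranspose

section Singlet

/-- The singlet `(|01⟩ - |10⟩)/√2`, whose projection is an optimal `X` in the semidefinite
program for `FStar`. -/
noncomputable def singlet : Q2 → ℂ :=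
  Pi.single (0, 1) ((√2)⁻¹ : ℂ) - Pi.single (1, 0) ((√2)⁻¹ : ℂ)

lemma inv_sqrt_two_mul_self : (√2 : ℂ)⁻¹ * (√2 : ℂ)⁻¹ = 1 / 2 := by
  rw [← mul_inv, ← ofReal_mul, Real.mul_self_sqrt zero_le_two, ofReal_ofNat, one_div]

lemma star_singlet_dotProduct_singlet : star singlet ⬝ᵥ singlet = 1 := by
  norm_num [dotProduct, singlet, Fintype.sum_prod_type, inv_sqrt_two_mul_self]

lemma star_phiPlus_dotProduct_phiPlus : star phiPlus ⬝ᵥ phiPlus = 1 := by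
  rw [phiPlus, star_ketChi_dotProduct_ketChi, ← mul_inv, Real.mul_self_sqrt zero_le_two]
  norm_num

lemma outer_phiPlus : outer phiPlus = (1 / 2 : ℂ) • outer (ketChi 1 1) := by
  ext ⟨i, j⟩ ⟨k, l⟩
  fin_cases i <;> fin_cases j <;> fin_cases k <;> fin_cases l <;>
    simp [outer, phiPlus, ketChi, inv_sqrt_two_mul_self]

lemma two_mul_expectation_phiPlus (ρ : Matrix Q2 Q2 ℂ) :
    2 * expectation phiPlus ρ = expectation (ketChi 1 1) ρ := by
  rw [← re_trace_outer_mul, ← re_trace_outer_mul, outer_phiPlus, smul_mul_assoc, trace_smul,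
    smul_eq_mul, one_div_mul_eq_div, div_ofNat_re, mul_div_cancel₀ _ two_ne_zero]

lemma ptrans_outer_singlet :
    ptrans (outer singlet) = (1 / 2 : ℂ) • (1 : Matrix Q2 Q2 ℂ) - outer phiPlus := by
  ext ⟨i, j⟩ ⟨k, l⟩
  fin_cases i <;> fin_cases j <;> fin_cases k <;> fin_cases l <;>
    simp [ptrans, outer, singlet, phiPlus, ketChi, one_apply, inv_sqrt_two_mul_self]

lemma re_trace_outer_singlet_mul_ptrans (ρ : Matrix Q2 Q2 ℂ) :
    (outer singlet * ptrans ρ).trace.re = ρ.trace.re / 2 - expectation phiPlus ρ := by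
  rw [trace_mul_ptrans, ptrans_outer_singlet, Matrix.sub_mul, trace_sub, sub_re,
    re_trace_half_smul_one_mul, re_trace_outer_mul]

end Singlet

section Duality

lemma half_sub_trace_mul_ptrans_le {X ρ B : Matrix Q2 Q2 ℂ} (hX : X.PosSemidef)
    (hXΓ : ((1 / 2 : ℂ) • (1 : Matrix Q2 Q2 ℂ) - ptrans X).PosSemidef)
    (hB : B.PosSemidef) (hρB : (ptrans (ρ + B)).PosSemidef) :
    1 / 2 - (X * ptrans ρ).trace.re ≤ (1 + B.trace.re) / 2 := by
  have hsum : 0 ≤ (X * ptrans ρ).trace.re + (ptrans X * B).trace.re := by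
    rw [← trace_mul_ptrans, ← add_re, ← trace_add, ← Matrix.mul_add, ← ptrans_add]
    exact (nonneg_iff.mp (trace_mul_nonneg_of_posSemidef hX hρB)).1
  have hslack : 0 ≤ B.trace.re / 2 - (ptrans X * B).trace.re := by
    rw [← re_trace_half_smul_one_mul, ← sub_re, ← trace_sub, ← Matrix.sub_mul]
    exact (nonneg_iff.mp (trace_mul_nonneg_of_posSemidef hXΓ hB)).1
  linarith

theorem FStar_eq_of_dual_certificate {ρ B : Matrix Q2 Q2 ℂ} (hB : B.PosSemidef)
    (hρB : (ptrans (ρ + B)).PosSemidef)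
    (htrace : ρ.trace.re + B.trace.re = 2 * expectation phiPlus ρ) :
    FStar ρ = (1 + B.trace.re) / 2 := by
  apply IsGreatest.csSup_eq
  constructor
  · have hlower : (ptrans (outer singlet) + (1 / 2 : ℂ) • (1 : Matrix Q2 Q2 ℂ)).PosSemidef := by
      have hsum : ptrans (outer singlet) + (1 / 2 : ℂ) • (1 : Matrix Q2 Q2 ℂ) =
          1 - outer phiPlus := by
        rw [ptrans_outer_singlet]
        module
      exact hsum ▸ one_sub_outer_posSemidef star_phiPlus_dotProduct_phiPlus
    have hupper : ((1 / 2 : ℂ) • (1 : Matrix Q2 Q2 ℂ) - ptrans (outer singlet)).PosSemidef := by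
      rw [ptrans_outer_singlet, sub_sub_cancel]
      exact outer_posSemidef phiPlus
    refine ⟨outer singlet, (outer_posSemidef _).isHermitian, outer_posSemidef _,
      one_sub_outer_posSemidef star_singlet_dotProduct_singlet, hlower, hupper, ?_⟩
    rw [re_trace_outer_singlet_mul_ptrans]
    linarith
  · rintro x ⟨X, -, hX, -, -, hXΓ, rfl⟩
    exact half_sub_trace_mul_ptrans_le hX hXΓ hB hρB

end Duality

section AmplitudeDamping

/-- The unnormalized state `|v⟩⟨v| + c² |10⟩⟨10|` with `v = a|00⟩ + b|11⟩`, the form taken by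
`|χ⟩⟨χ|` after amplitude damping. -/
noncomputable def dampedKetChi (a b c : ℝ) : Matrix Q2 Q2 ℂ :=
  outer (ketChi a b) + outer (Pi.single (1, 0) (c : ℂ))

/-- The matrix `c² |01⟩⟨01| + (ab - c²) (|00⟩ - |11⟩)(⟨00| - ⟨11|)`, the optimal dual variable
of the semidefinite program at `dampedKetChi a b c`. -/
noncomputable def dualCertificate (a b c : ℝ) : Matrix Q2 Q2 ℂ :=
  outer (Pi.single (0, 1) (c : ℂ)) + (a * b - c ^ 2) • outer (ketChi 1 (-1))

lemma one_kronecker_M0_mulVec_ketChi (p α β : ℝ) :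
    ((1 : Matrix (Fin 2) (Fin 2) ℂ) ⊗ₖ M0 p) *ᵥ ketChi α β = ketChi α (β * √(1 - p)) := by
  ext ⟨i, j⟩
  fin_cases i <;> fin_cases j <;>
    simp [mulVec, dotProduct, Fintype.sum_prod_type, ketChi, M0, mul_comm]

lemma one_kronecker_M1_mulVec_ketChi (p α β : ℝ) :
    ((1 : Matrix (Fin 2) (Fin 2) ℂ) ⊗ₖ M1 p) *ᵥ ketChi α β =
      Pi.single (1, 0) ((β * √p : ℝ) : ℂ) := by
  ext ⟨i, j⟩
  fin_cases i <;> fin_cases j <;>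
    simp [mulVec, dotProduct, Fintype.sum_prod_type, ketChi, M1, mul_comm]

lemma ampDamp_outer_ketChi (p α β : ℝ) :
    ampDamp p (outer (ketChi α β)) = dampedKetChi α (β * √(1 - p)) (β * √p) := by
  rw [ampDamp, mul_outer_mul_conjTranspose, mul_outer_mul_conjTranspose,
    one_kronecker_M0_mulVec_ketChi, one_kronecker_M1_mulVec_ketChi, dampedKetChi]

lemma two_mul_expectation_phiPlus_dampedKetChi (a b c : ℝ) :
    2 * expectation phiPlus (dampedKetChi a b c) = (a + b) ^ 2 := by
  have horth : star (ketChi 1 1) ⬝ᵥ Pi.single (1, 0) (c : ℂ) = 0 := by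
    simp [ketChi]
  rw [two_mul_expectation_phiPlus, dampedKetChi, expectation_add, expectation_outer,
    expectation_outer, star_ketChi_dotProduct_ketChi, horth, normSq_ofReal, map_zero]
  ring

lemma re_trace_dampedKetChi (a b c : ℝ) :
    (dampedKetChi a b c).trace.re = a ^ 2 + b ^ 2 + c ^ 2 := by
  rw [dampedKetChi, trace_add, trace_outer, trace_outer, star_ketChi_dotProduct_ketChi,
    star_single_dotProduct_single, ← ofReal_add, ofReal_re]
  ring

lemma re_trace_dualCertificate (a b c : ℝ) :
    (dualCertificate a b c).trace.re = 2 * a * b - c ^ 2 := by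
  rw [dualCertificate, trace_add, trace_smul, trace_outer, trace_outer,
    star_ketChi_dotProduct_ketChi, star_single_dotProduct_single, add_re, smul_re, ofReal_re,
    ofReal_re, smul_eq_mul]
  ring

lemma dualCertificate_posSemidef {a b c : ℝ} (h : c ^ 2 ≤ a * b) :
    (dualCertificate a b c).PosSemidef :=
  (outer_posSemidef _).add ((outer_posSemidef _).smul (sub_nonneg.mpr h))

lemma ptrans_dampedKetChi_add_dualCertificate (a b c : ℝ) :
    ptrans (dampedKetChi a b c + dualCertificate a b c) =
      outer (Pi.single (0, 1) (c : ℂ) + Pi.single (1, 0) (c : ℂ)) +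
        (a ^ 2 + (a * b - c ^ 2)) • outer (Pi.single (0, 0) 1) +
        (b ^ 2 + (a * b - c ^ 2)) • outer (Pi.single (1, 1) 1) := by
  ext ⟨i, j⟩ ⟨k, l⟩
  fin_cases i <;> fin_cases j <;> fin_cases k <;> fin_cases l <;>
    simp [ptrans, dampedKetChi, dualCertificate, outer, ketChi] <;> ring

lemma ptrans_dampedKetChi_add_dualCertificate_posSemidef {a b c : ℝ} (h : c ^ 2 ≤ a * b) :
    (ptrans (dampedKetChi a b c + dualCertificate a b c)).PosSemidef := by
  have hκ : 0 ≤ a * b - c ^ 2 := sub_nonneg.mpr h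
  rw [ptrans_dampedKetChi_add_dualCertificate]
  exact ((outer_posSemidef _).add
    ((outer_posSemidef _).smul (add_nonneg (sq_nonneg a) hκ))).add
    ((outer_posSemidef _).smul (add_nonneg (sq_nonneg b) hκ))

theorem FStar_dampedKetChi {a b c : ℝ} (h : c ^ 2 ≤ a * b) :
    FStar (dampedKetChi a b c) = (1 + 2 * a * b - c ^ 2) / 2 := by
  have htrace : (dampedKetChi a b c).trace.re + (dualCertificate a b c).trace.re =
      2 * expectation phiPlus (dampedKetChi a b c) := by
    rw [re_trace_dampedKetChi, re_trace_dualCertificate,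
      two_mul_expectation_phiPlus_dampedKetChi]
    ring
  rw [FStar_eq_of_dual_certificate (dualCertificate_posSemidef h)
    (ptrans_dampedKetChi_add_dualCertificate_posSemidef h) htrace, re_trace_dualCertificate]
  ring

lemma mul_sq_le_mul_mul_sqrt_one_sub {p α β : ℝ} (hα : 0 ≤ α) (hβ : 0 ≤ β)
    (hnorm : α ^ 2 + β ^ 2 = 1) (hlow : p ^ 2 / (1 - p + p ^ 2) ≤ α ^ 2) :
    p * β ^ 2 ≤ α * β * √(1 - p) := by
  have hden : 0 < 1 - p + p ^ 2 := by nlinarith [sq_nonneg (p - 1)]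
  have hsq : (p * β) ^ 2 ≤ α ^ 2 * (1 - p) := by
    have hp : p ^ 2 ≤ α ^ 2 * (1 - p + p ^ 2) := (div_le_iff₀ hden).mp hlow
    linear_combination hp + p ^ 2 * hnorm
  have hroot : p * β ≤ α * √(1 - p) := by
    simpa only [Real.sqrt_mul (sq_nonneg α), Real.sqrt_sq hα] using Real.le_sqrt_of_sq_le hsq
  calc
    p * β ^ 2 = p * β * β := by ring
    _ ≤ α * √(1 - p) * β := mul_le_mul_of_nonneg_right hroot hβ
    _ = α * β * √(1 - p) := by ring

theorem FStar_regime_one_general {p α β : ℝ} (hp : 0 ≤ p)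
    (h : p * β ^ 2 ≤ α * β * √(1 - p)) :
    FStar (ampDamp p (outer (ketChi α β))) =
      (1 + 2 * α * β * √(1 - p) - p * β ^ 2) / 2 := by
  have hc : (β * √p) ^ 2 = p * β ^ 2 := by rw [mul_pow, Real.sq_sqrt hp, mul_comm]
  rw [ampDamp_outer_ketChi, FStar_dampedKetChi (by rwa [hc, ← mul_assoc]), hc]
  ring

end AmplitudeDamping

/-- For `0 < p < 1`, `α ≥ β > 0`, `α² + β² = 1` and
`p²/(1−p+p²) ≤ α² < 1`, the maximum achievable fidelity under trace-preserving LOCC of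
`ρ(χ(α), Λ_p)` equals the pre-processed fidelity `(1 + 2αβ√(1−p) − pβ²)/2`. -/
theorem FStar_regime_one (p α β : ℝ) (hp0 : 0 < p) (hp1 : p < 1)
    (hba : β ≤ α) (hb : 0 < β) (hnorm : α ^ 2 + β ^ 2 = 1)
    (hlow : p ^ 2 / (1 - p + p ^ 2) ≤ α ^ 2) (hhigh : α ^ 2 < 1) :
    FStar (ampDamp p (outer (ketChi α β))) =
      (1 + 2 * α * β * Real.sqrt (1 - p) - p * β ^ 2) / 2 :=
  FStar_regime_one_general hp0.le
    (mul_sq_le_mul_mul_sqrt_one_sub (hb.le.trans hba) hb.le hnorm hlow)
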